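/- Let p be a prime number, μ the Haar measure on ℚ_pˣ with μ(ℤ_pˣ) = 1, v the normalized p-adic valuation, |·|_p the normalized absolute value, and χ(t) = (-1)^{v(t)}. Let c, ζ, u₁, u₂ ∈ ℚ_pˣ with u₁·u₂ = ζ, and define Orb(ζ, φ'_c, s) := χ(u₁)·|u₁|_p^{-s} · ∫_{ℚ_pˣ} 1_{ℤ_p}(u₁·t⁻¹) · 1_{c·ℤ_p}(t·u₂) · |t|_p^{s} · χ(t) dμ(t) for s ∈ ℝ. If v(ζ) - v(c) is odd, then s ↦ Orb(ζ, φ'_c, s) is differentiable at s = 0 with derivative ∂Orb(ζ, φ'_c) = -max{0, (1 + v(c⁻¹·ζ))/2} · log p. -/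

import Mathlib

open MeasureTheory

/-- The normalized non-archimedean local orbital integral (with transfer factor)
for the test function `φ'_c = 1_{ℤ_p × c·ℤ_p}` on `ℚ_p × ℚ_p`, defined using a Haar
measure `μ` on `ℚ_pˣ`.  Here `χ(t) = (-1)^{v(t)}` is the quadratic character of the
unramified quadratic extension of `ℚ_p`. -/
noncomputable def padicOrb (p : ℕ) [Fact p.Prime] [MeasurableSpace ℚ_[p]ˣ]
    (μ : Measure ℚ_[p]ˣ) (c u₁ u₂ : ℚ_[p]ˣ) (s : ℝ) : ℝ :=
  (-1 : ℝ) ^ ((u₁ : ℚ_[p]).valuation) * ‖(u₁ : ℚ_[p])‖ ^ (-s) *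
    ∫ t : ℚ_[p]ˣ,
      (Set.indicator {x : ℚ_[p] | ‖x‖ ≤ 1} (fun _ => (1 : ℝ)) ((u₁ : ℚ_[p]) * ((t : ℚ_[p]))⁻¹)) *
      (Set.indicator {y : ℚ_[p] | ‖y‖ ≤ ‖(c : ℚ_[p])‖} (fun _ => (1 : ℝ))
        ((t : ℚ_[p]) * (u₂ : ℚ_[p]))) *
      ‖(t : ℚ_[p])‖ ^ s * (-1 : ℝ) ^ ((t : ℚ_[p]).valuation) ∂μ

/-!
The pushforward of a Haar measure on `ℚ_pˣ` along the valuation is a multiple of the counting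
measure on `ℤ`, and the integrand of the orbital integral depends on `t` only through `v(t)`.
Substituting `k = v(u₁) - v(t)` turns the orbital integral into the geometric sum
`∑ x ^ k` over `0 ≤ k ≤ v(c⁻¹ u₁ u₂)`, where `x = -p ^ s`. When `v(c⁻¹ u₁ u₂)` is odd, the number
of terms is an even number `2 m`, and the sum is `(1 + x) (1 + x ^ 2 + ⋯ + x ^ (2 (m - 1)))`. At
`x = -1`, the value of `x` at `s = 0`, the first factor vanishes and the second is `m`, so the
derivative in `x` is `m`.
-/

section FiniteSums

theorem geom_sum_two_mul {R : Type*} [Semiring R] (x : R) (m : ℕ) :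
    ∑ k ∈ Finset.range (2 * m), x ^ k = (1 + x) * ∑ k ∈ Finset.range m, (x ^ 2) ^ k := by
  induction m with
  | zero => simp
  | succ m ih =>
    have hpair : (1 + x) * (x ^ 2) ^ m = x ^ (2 * m) + x ^ (2 * m + 1) := by
      rw [← pow_mul, add_mul, one_mul, ← pow_succ']
    rw [mul_add_one, Finset.sum_range_succ, Finset.sum_range_succ, ih, Finset.sum_range_succ _ m,
      mul_add, hpair, add_assoc]

theorem hasDerivAt_geom_sum_two_mul_neg_one {𝕜 : Type*} [NontriviallyNormedField 𝕜] (m : ℕ) :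
    HasDerivAt (fun x : 𝕜 => ∑ k ∈ Finset.range (2 * m), x ^ k) m (-1) := by
  have hfactor : HasDerivAt (fun x : 𝕜 => 1 + x) 1 (-1) := (hasDerivAt_id _).const_add 1
  have hcofactor : DifferentiableAt 𝕜 (fun x : 𝕜 => ∑ k ∈ Finset.range m, (x ^ 2) ^ k) (-1) := by
    fun_prop
  simp only [geom_sum_two_mul]
  exact (hfactor.fun_mul hcofactor.hasDerivAt).congr_deriv (by simp)

theorem sum_Icc_int_eq_sum_range {M : Type*} [AddCommMonoid M] (f : ℤ → M) (a b : ℤ) :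
    ∑ n ∈ Finset.Icc a b, f n = ∑ k ∈ Finset.range (b - a + 1).toNat, f (b - k) := by
  refine Finset.sum_nbij' (fun n => (b - n).toNat) (fun k => b - k) ?_ ?_ ?_ ?_ ?_ <;>
    intro n hn <;> simp only [Finset.mem_Icc, Finset.mem_range] at hn ⊢
  case refine_5 => congr 1; omega
  all_goals omega

end FiniteSums

section Valuation

variable {p : ℕ} [Fact p.Prime]

theorem padic_norm_le_norm_iff {x y : ℚ_[p]} (hx : x ≠ 0) (hy : y ≠ 0) :
    ‖x‖ ≤ ‖y‖ ↔ y.valuation ≤ x.valuation := by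
  have hp : (1 : ℝ) < p := mod_cast (Fact.out : p.Prime).one_lt
  rw [Padic.norm_eq_zpow_neg_valuation hx, Padic.norm_eq_zpow_neg_valuation hy,
    zpow_le_zpow_iff_right₀ hp, neg_le_neg_iff]

theorem padic_norm_eq_norm_iff {x y : ℚ_[p]} (hx : x ≠ 0) (hy : y ≠ 0) :
    ‖x‖ = ‖y‖ ↔ x.valuation = y.valuation := by
  rw [le_antisymm_iff, padic_norm_le_norm_iff hx hy, padic_norm_le_norm_iff hy hx,
    ← le_antisymm_iff, eq_comm]

theorem norm_rpow_mul_neg_one_zpow_valuation {x : ℚ_[p]} (hx : x ≠ 0) (s : ℝ) :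
    ‖x‖ ^ s * (-1 : ℝ) ^ x.valuation = (-(p : ℝ) ^ (-s)) ^ x.valuation := by
  have hp : (0 : ℝ) ≤ p := p.cast_nonneg
  have hnorm : ‖x‖ ^ s = ((p : ℝ) ^ (-s)) ^ x.valuation := by
    rw [Padic.norm_eq_zpow_neg_valuation hx, ← Real.rpow_intCast, ← Real.rpow_mul hp,
      ← Real.rpow_intCast, ← Real.rpow_mul hp]
    push_cast
    ring_nf
  rw [hnorm, ← mul_zpow, mul_neg_one]

theorem valuation_inv_mul_units (x y : ℚ_[p]ˣ) :
    ((x⁻¹ * y : ℚ_[p]ˣ) : ℚ_[p]).valuation = (y : ℚ_[p]).valuation - (x : ℚ_[p]).valuation := by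
  rw [Units.val_mul, Padic.valuation_mul x⁻¹.ne_zero y.ne_zero, Units.val_inv_eq_inv_val,
    Padic.valuation_inv, neg_add_eq_sub]

end Valuation

section ValuationPushforward

variable {p : ℕ} [Fact p.Prime] [MeasurableSpace ℚ_[p]ˣ] [BorelSpace ℚ_[p]ˣ]

theorem measurable_valuation_units : Measurable fun t : ℚ_[p]ˣ => (t : ℚ_[p]).valuation := by
  have hclosed (u : ℚ_[p]ˣ) : IsClosed {t : ℚ_[p]ˣ | ‖(t : ℚ_[p])‖ = ‖(u : ℚ_[p])‖} :=
    isClosed_eq (continuous_norm.comp Units.continuous_val) continuous_const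
  refine measurable_to_countable fun u => ?_
  convert (hclosed u).measurableSet using 1
  ext t
  exact (padic_norm_eq_norm_iff t.ne_zero u.ne_zero).symm

theorem measure_valuation_eq (μ : Measure ℚ_[p]ˣ) [μ.IsMulLeftInvariant] (n : ℤ) :
    μ {t : ℚ_[p]ˣ | (t : ℚ_[p]).valuation = n} = μ {t : ℚ_[p]ˣ | ‖(t : ℚ_[p])‖ = 1} := by
  have hp : (p : ℚ_[p]) ≠ 0 := mod_cast (Fact.out : p.Prime).ne_zero
  let ϖ : ℚ_[p]ˣ := Units.mk0 p hp
  rw [← measure_preimage_mul μ (ϖ ^ (-n)) {t | ‖(t : ℚ_[p])‖ = 1}]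
  congr 1
  ext t
  have hval : ((ϖ ^ (-n) * t : ℚ_[p]ˣ) : ℚ_[p]).valuation = -n + (t : ℚ_[p]).valuation := by
    simp [ϖ, Padic.valuation_mul, hp, zpow_ne_zero, -zpow_neg]
  rw [Set.mem_preimage, Set.mem_ofPred_eq, Set.mem_ofPred_eq, ← norm_one (α := ℚ_[p]),
    padic_norm_eq_norm_iff (Units.ne_zero _) one_ne_zero, hval, Padic.valuation_one]
  omega

theorem map_valuation_eq_smul_count (μ : Measure ℚ_[p]ˣ) [μ.IsMulLeftInvariant] :
    μ.map (fun t : ℚ_[p]ˣ => (t : ℚ_[p]).valuation) =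
      μ {t : ℚ_[p]ˣ | ‖(t : ℚ_[p])‖ = 1} • Measure.count := by
  refine Measure.ext_of_singleton fun n => ?_
  rw [Measure.map_apply measurable_valuation_units (measurableSet_singleton n),
    Measure.smul_apply, Measure.count_singleton, smul_eq_mul, mul_one]
  exact measure_valuation_eq μ n

theorem integral_indicator_comp_valuation {E : Type*} [NormedAddCommGroup E] [NormedSpace ℝ E]
    [CompleteSpace E] (μ : Measure ℚ_[p]ˣ) [μ.IsMulLeftInvariant] (S : Finset ℤ) (f : ℤ → E) :
    ∫ t : ℚ_[p]ˣ, (S : Set ℤ).indicator f (t : ℚ_[p]).valuation ∂μ =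
      μ.real {t : ℚ_[p]ˣ | ‖(t : ℚ_[p])‖ = 1} • ∑ n ∈ S, f n := by
  have hintegrable : IntegrableOn f S (Measure.count : Measure ℤ) := by
    rw [← Set.biUnion_of_singleton (S : Set ℤ)]
    simp [integrableOn_finset_iUnion]
  rw [← integral_map (φ := fun t : ℚ_[p]ˣ => (t : ℚ_[p]).valuation)
      measurable_valuation_units.aemeasurable (by fun_prop),
    map_valuation_eq_smul_count, integral_smul_measure,
    integral_indicator S.measurableSet, setIntegral_finset S hintegrable]
  simp [measureReal_def]

end ValuationPushforward

section OrbitalIntegral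

variable {p : ℕ} [Fact p.Prime]

theorem padicOrb_integrand_eq (c u₁ u₂ t : ℚ_[p]ˣ) (s : ℝ) :
    Set.indicator {x : ℚ_[p] | ‖x‖ ≤ 1} (fun _ => (1 : ℝ)) ((u₁ : ℚ_[p]) * (t : ℚ_[p])⁻¹) *
        Set.indicator {y : ℚ_[p] | ‖y‖ ≤ ‖(c : ℚ_[p])‖} (fun _ => (1 : ℝ))
          ((t : ℚ_[p]) * (u₂ : ℚ_[p])) *
        ‖(t : ℚ_[p])‖ ^ s * (-1 : ℝ) ^ (t : ℚ_[p]).valuation =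
      Set.indicator (Finset.Icc ((c : ℚ_[p]).valuation - (u₂ : ℚ_[p]).valuation)
          (u₁ : ℚ_[p]).valuation : Set ℤ)
        (fun n => (-(p : ℝ) ^ (-s)) ^ n) (t : ℚ_[p]).valuation := by
  have hfirst : ‖(u₁ : ℚ_[p]) * (t : ℚ_[p])⁻¹‖ ≤ 1 ↔
      (t : ℚ_[p]).valuation ≤ (u₁ : ℚ_[p]).valuation := by
    rw [Padic.norm_le_one_iff_val_nonneg,
      Padic.valuation_mul u₁.ne_zero (inv_ne_zero t.ne_zero), Padic.valuation_inv]
    omega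
  have hsecond : ‖(t : ℚ_[p]) * (u₂ : ℚ_[p])‖ ≤ ‖(c : ℚ_[p])‖ ↔
      (c : ℚ_[p]).valuation - (u₂ : ℚ_[p]).valuation ≤ (t : ℚ_[p]).valuation := by
    rw [padic_norm_le_norm_iff (mul_ne_zero t.ne_zero u₂.ne_zero) c.ne_zero,
      Padic.valuation_mul t.ne_zero u₂.ne_zero, sub_le_iff_le_add]
  rw [mul_assoc, norm_rpow_mul_neg_one_zpow_valuation t.ne_zero]
  simp only [Set.indicator_apply, Set.mem_ofPred_eq, hfirst, hsecond, Finset.coe_Icc, Set.mem_Icc]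
  split_ifs <;> simp_all

theorem padicOrb_eq_geom_sum [MeasurableSpace ℚ_[p]ˣ] [BorelSpace ℚ_[p]ˣ]
    (μ : Measure ℚ_[p]ˣ) [μ.IsMulLeftInvariant] (c u₁ u₂ : ℚ_[p]ˣ) (s : ℝ) :
    padicOrb p μ c u₁ u₂ s = μ.real {t : ℚ_[p]ˣ | ‖(t : ℚ_[p])‖ = 1} *
      ∑ k ∈ Finset.range (((c⁻¹ * (u₁ * u₂) : ℚ_[p]ˣ) : ℚ_[p]).valuation + 1).toNat,
        (-(p : ℝ) ^ s) ^ k := by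
  have hp : (0 : ℝ) < p := mod_cast (Fact.out : p.Prime).pos
  have hx : -(p : ℝ) ^ s ≠ 0 := neg_ne_zero.2 (Real.rpow_pos_of_pos hp s).ne'
  have hinv : -(p : ℝ) ^ (-s) = (-(p : ℝ) ^ s)⁻¹ := by rw [Real.rpow_neg hp.le, inv_neg]
  have hterm (a : ℤ) (k : ℕ) :
      (-(p : ℝ) ^ s) ^ a * (-(p : ℝ) ^ (-s)) ^ (a - k) = (-(p : ℝ) ^ s) ^ k := by
    rw [hinv, inv_zpow', ← zpow_add₀ hx, neg_sub, add_sub_cancel, zpow_natCast]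
  have hlen : ((c⁻¹ * (u₁ * u₂) : ℚ_[p]ˣ) : ℚ_[p]).valuation = (u₁ : ℚ_[p]).valuation -
      ((c : ℚ_[p]).valuation - (u₂ : ℚ_[p]).valuation) := by
    rw [valuation_inv_mul_units, Units.val_mul, Padic.valuation_mul u₁.ne_zero u₂.ne_zero]
    ring
  simp only [padicOrb, padicOrb_integrand_eq]
  rw [integral_indicator_comp_valuation, sum_Icc_int_eq_sum_range, ← hlen, mul_comm (_ ^ _),
    norm_rpow_mul_neg_one_zpow_valuation u₁.ne_zero, neg_neg, smul_eq_mul, mul_left_comm,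
    Finset.mul_sum]
  simp only [hterm]

end OrbitalIntegral

theorem hasDerivAt_geom_sum_neg_rpow {a : ℝ} (ha : 0 < a) (m : ℕ) :
    HasDerivAt (fun s : ℝ => ∑ k ∈ Finset.range (2 * m), (-a ^ s) ^ k) (-m * Real.log a) 0 := by
  have hbase : HasDerivAt (fun s : ℝ => -a ^ s) (-Real.log a) 0 := by
    simpa using (Real.hasStrictDerivAt_const_rpow ha 0).hasDerivAt.fun_neg
  have hsum := hasDerivAt_geom_sum_two_mul_neg_one (𝕜 := ℝ) m
  rw [show (-1 : ℝ) = -a ^ (0 : ℝ) by simp] at hsum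
  have hcomp := hsum.comp (0 : ℝ) hbase
  exact hcomp.congr_deriv (by rw [mul_neg, neg_mul])

/-- When `v(ζ) - v(c)` is odd, the normalized local orbital integral for
`φ'_c = 1_{ℤ_p × c·ℤ_p}` is differentiable at `s = 0` with derivative
`∂Orb(ζ, φ'_c) = -max{0, (1 + v(c⁻¹ζ))/2} · log p`. -/
theorem stmt3 (p : ℕ) [Fact p.Prime]
    [MeasurableSpace ℚ_[p]ˣ] [BorelSpace ℚ_[p]ˣ]
    (μ : Measure ℚ_[p]ˣ) [μ.IsHaarMeasure]
    (hμ : μ {t : ℚ_[p]ˣ | ‖(t : ℚ_[p])‖ = 1} = 1)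
    (c ζ u₁ u₂ : ℚ_[p]ˣ) (hu : u₁ * u₂ = ζ)
    (hodd : Odd ((ζ : ℚ_[p]).valuation - (c : ℚ_[p]).valuation)) :
    HasDerivAt (fun s : ℝ => padicOrb p μ c u₁ u₂ s)
      (-(max 0 ((1 + ((((c⁻¹ * ζ : ℚ_[p]ˣ) : ℚ_[p]).valuation : ℝ)) ) / 2)) * Real.log p)
      0 := by
  subst hu
  have hp : (0 : ℝ) < p := mod_cast (Fact.out : p.Prime).pos
  rw [← valuation_inv_mul_units] at hodd
  obtain ⟨j, hj⟩ := hodd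
  have hlen : (2 * j + 1 + 1).toNat = 2 * (j + 1).toNat := by omega
  have hmax : max 0 ((1 + ((2 * j + 1 : ℤ) : ℝ)) / 2) = ((j + 1).toNat : ℝ) := by
    rw [← Int.cast_natCast, Int.toNat_eq_max, max_comm]
    push_cast
    ring_nf
  simp only [padicOrb_eq_geom_sum, measureReal_def, hμ, ENNReal.toReal_one, one_mul, hj, hlen, hmax]
  exact hasDerivAt_geom_sum_neg_rpow hp _
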